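/- arXiv:1903.05698 — 3 statements merged into one kernel-verified Lean document; each statement's English description precedes it below -/
import Mathlib

section
/- Assume H is 2q-observable and 2q ≤ m. Then for every fixed y ∈ ℝ^m, the function φ ↦ rad(X(y,φ)) from ℝ to ℝ is monotone nondecreasing and right-continuous at every φ₀ ∈ ℝ. -/
/-- The inconsistency `d_x(y)` for `x ∈ ℝ^n` (with the Euclidean structure). -/
noncomputable def dinc (m n q : ℕ) (H : Matrix (Fin m) (Fin n) ℝ) (W : Fin m → ℝ)
    (x : EuclideanSpace ℝ (Fin n)) (y : Fin m → ℝ) : ℝ :=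
  sInf { v : ℝ | ∃ a : Fin m → ℝ, (Function.support a).ncard ≤ q ∧
    v = (1 / 2 : ℝ) * ∑ i, (y i - (∑ j, H i j * x j) + a i) ^ 2 / W i }

/-- The sublevel set `X(y,φ) := {x : d_x(y) ≤ φ}`. -/
noncomputable def sublevel (m n q : ℕ) (H : Matrix (Fin m) (Fin n) ℝ) (W : Fin m → ℝ)
    (y : Fin m → ℝ) (φ : ℝ) : Set (EuclideanSpace ℝ (Fin n)) :=
  { x | dinc m n q H W x y ≤ φ }

/-- The radius `rad(A) := inf_c sup_{x ∈ A} ‖x − c‖₂` (with `rad ∅ = 0`). -/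
noncomputable def rad (n : ℕ) (A : Set (EuclideanSpace ℝ (Fin n))) : ℝ :=
  ⨅ c : EuclideanSpace ℝ (Fin n), ⨆ x ∈ A, dist x c

/-- `H` is `2q`-observable: every `(m−2q)`-row submatrix has full column rank `n`. -/
def TwoQObservable (m n q : ℕ) (H : Matrix (Fin m) (Fin n) ℝ) : Prop :=
  2 * q ≤ m ∧ ∀ I : Finset (Fin m), I.card = m - 2 * q →
    (Matrix.of fun (i : { i // i ∈ I }) (j : Fin n) => H i.1 j).rank = n

/-!
The infimum defining `d_x(y)` is attained: an attack supported in `I` can cancel the residual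
exactly on `I`, so `d_x(y) ≤ φ` iff for some `I` with `|I| ≤ q` the residual cost of the rows
outside `I` is at most `φ`. Deleting at most `q` rows leaves `H` injective, so each of these
finitely many conditions cuts out a compact set, and hence `X(y,φ)` is compact. Now `X(y,φ₀)` is the
intersection of the compact sets `X(y,φ)` for `φ > φ₀`; a ball slightly larger than optimal around
`X(y,φ₀)` is therefore a neighbourhood containing `X(y,φ)` as soon as `φ` is close to `φ₀`.
-/

open Function Metric Set Topology

section ChebyshevRadius

variable {X : Type*}

/-- The Chebyshev radius of a set: the infimum of the radii of the balls containing it. It is the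
radius `rad` in an arbitrary metric space. The supremum is real-valued, so the definition is
meaningful only for bounded sets. -/
noncomputable def chebyshevRadius [PseudoMetricSpace X] (A : Set X) : ℝ :=
  ⨅ c, ⨆ x ∈ A, dist x c

theorem chebyshevRadius_nonneg [PseudoMetricSpace X] (A : Set X) : 0 ≤ chebyshevRadius A :=
  Real.iInf_nonneg fun _ => Real.iSup_nonneg fun _ => Real.iSup_nonneg fun _ => dist_nonneg

theorem chebyshevRadius_le_of_subset_closedBall [PseudoMetricSpace X] {A : Set X} {c : X} {r : ℝ}
    (hr : 0 ≤ r) (hA : A ⊆ closedBall c r) : chebyshevRadius A ≤ r := by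
  have hbdd : BddBelow (range fun c : X => ⨆ x ∈ A, dist x c) :=
    ⟨0, forall_mem_range.2 fun _ =>
      Real.iSup_nonneg fun _ => Real.iSup_nonneg fun _ => dist_nonneg⟩
  exact (ciInf_le hbdd c).trans (Real.iSup_le (fun _ => Real.iSup_le (fun hx => hA hx) hr) hr)

theorem dist_le_biSup_dist [PseudoMetricSpace X] {A : Set X} (hA : Bornology.IsBounded A) (c : X)
    {x : X} (hx : x ∈ A) : dist x c ≤ ⨆ z ∈ A, dist z c := by
  obtain ⟨R, hR⟩ := hA.subset_closedBall c
  have hbdd : BddAbove (range fun z => ⨆ _ : z ∈ A, dist z c) :=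
    ⟨R, forall_mem_range.2 fun _ =>
      Real.iSup_le (fun hz => hR hz) (dist_nonneg.trans (hR hx))⟩
  exact (ciSup_pos (f := fun _ : x ∈ A => dist x c) hx).ge.trans (le_ciSup hbdd x)

theorem exists_subset_ball_of_chebyshevRadius_lt [PseudoMetricSpace X] [Nonempty X] {A : Set X}
    {r : ℝ} (hA : Bornology.IsBounded A) (h : chebyshevRadius A < r) : ∃ c, A ⊆ ball c r := by
  obtain ⟨c, hc⟩ := exists_lt_of_ciInf_lt h
  exact ⟨c, fun x hx => (dist_le_biSup_dist hA c hx).trans_lt hc⟩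

theorem chebyshevRadius_mono [PseudoMetricSpace X] [Nonempty X] {A B : Set X} (hAB : A ⊆ B)
    (hB : Bornology.IsBounded B) : chebyshevRadius A ≤ chebyshevRadius B := by
  refine le_of_forall_gt_imp_ge_of_dense fun r hr => ?_
  obtain ⟨c, hc⟩ := exists_subset_ball_of_chebyshevRadius_lt hB hr
  exact chebyshevRadius_le_of_subset_closedBall ((chebyshevRadius_nonneg B).trans hr.le)
    ((hAB.trans hc).trans ball_subset_closedBall)

variable {α : Type*} [LinearOrder α] {f : X → α}

theorem monotone_chebyshevRadius_le [PseudoMetricSpace X] [Nonempty X]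
    (hf : ∀ φ, Bornology.IsBounded {x | f x ≤ φ}) :
    Monotone fun φ => chebyshevRadius {x | f x ≤ φ} :=
  fun _ ψ hφψ => chebyshevRadius_mono (fun _ hx => le_trans hx hφψ) (hf ψ)

variable [DenselyOrdered α] [NoMaxOrder α] [TopologicalSpace α] [OrderTopology α]

theorem eventually_setOf_le_subset_of_isCompact [TopologicalSpace X] [T2Space X]
    (hf : ∀ φ, IsCompact {x | f x ≤ φ}) {φ₀ : α} {U : Set X} (hU : IsOpen U)
    (hsub : {x | f x ≤ φ₀} ⊆ U) : ∀ᶠ φ in 𝓝[≥] φ₀, {x | f x ≤ φ} ⊆ U := by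
  have hdir : Directed (· ⊇ ·) fun ψ : Ioi φ₀ => {x | f x ≤ ψ} :=
    Monotone.directed_ge fun _ _ hψ _ hx => le_trans hx hψ
  obtain ⟨ψ, hψ⟩ : ∃ ψ : Ioi φ₀, {x | f x ≤ ψ} ⊆ U := by
    refine exists_subset_nhds_of_isCompact hdir (fun ψ => hf ψ) fun x hx => ?_
    refine hU.mem_nhds (hsub (le_of_forall_gt_imp_ge_of_dense fun ψ hψ => ?_))
    exact mem_iInter.1 hx ⟨ψ, hψ⟩
  filter_upwards [mem_nhdsWithin_of_mem_nhds (Iio_mem_nhds ψ.2)] with φ hφ x hx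
  exact hψ (le_trans hx hφ.le)

theorem continuousWithinAt_chebyshevRadius_le [MetricSpace X] [Nonempty X]
    (hf : ∀ φ, IsCompact {x | f x ≤ φ}) (φ₀ : α) :
    ContinuousWithinAt (fun φ => chebyshevRadius {x | f x ≤ φ}) (Ici φ₀) φ₀ := by
  refine tendsto_order.2 ⟨fun a ha => ?_, fun b hb => ?_⟩
  · filter_upwards [self_mem_nhdsWithin] with φ hφ
    exact ha.trans_le (monotone_chebyshevRadius_le (fun φ => (hf φ).isBounded) hφ)
  · obtain ⟨r, hr, hrb⟩ := exists_between hb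
    obtain ⟨c, hc⟩ := exists_subset_ball_of_chebyshevRadius_lt (hf φ₀).isBounded hr
    filter_upwards [eventually_setOf_le_subset_of_isCompact hf isOpen_ball hc] with φ hφ
    have hr₀ : 0 ≤ r := (chebyshevRadius_nonneg _).trans hr.le
    exact (chebyshevRadius_le_of_subset_closedBall hr₀
      (hφ.trans ball_subset_closedBall)).trans_lt hrb

end ChebyshevRadius

section ResidualCost

variable {ι : Type*} {W : ι → ℝ}

/-- The weighted least-squares cost of a residual vector `r`, counting only the coordinates in `S`.
With `S = univ` it is the objective minimised in `dinc`. -/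
noncomputable def residualCost (W : ι → ℝ) (S : Finset ι) (r : ι → ℝ) : ℝ :=
  (1 / 2 : ℝ) * ∑ i ∈ S, r i ^ 2 / W i

theorem residualCost_mono (hW : ∀ i, 0 < W i) {S T : Finset ι} (hST : S ⊆ T) (r : ι → ℝ) :
    residualCost W S r ≤ residualCost W T r :=
  mul_le_mul_of_nonneg_left
    (Finset.sum_le_sum_of_subset_of_nonneg hST fun i _ _ => div_nonneg (sq_nonneg _) (hW i).le)
    one_half_pos.le

theorem residualCost_congr {S : Finset ι} {r s : ι → ℝ} (h : ∀ i ∈ S, r i = s i) :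
    residualCost W S r = residualCost W S s :=
  congrArg ((1 / 2 : ℝ) * ·) (Finset.sum_congr rfl fun i hi => by rw [h i hi])

theorem residualCost_eq_univ_subtype (S : Finset ι) (r : ι → ℝ) :
    residualCost W S r = residualCost (fun i : S => W i) Finset.univ (fun i : S => r i) :=
  congrArg _ (Finset.sum_coe_sort S fun i => r i ^ 2 / W i).symm

theorem sq_le_of_residualCost_le (hW : ∀ i, 0 < W i) {S : Finset ι} {r : ι → ℝ} {φ : ℝ}
    (h : residualCost W S r ≤ φ) {i : ι} (hi : i ∈ S) : r i ^ 2 ≤ 2 * φ * W i := by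
  have hsingle : residualCost W {i} r ≤ φ :=
    (residualCost_mono hW (Finset.singleton_subset_iff.2 hi) r).trans h
  rw [residualCost, Finset.sum_singleton] at hsingle
  exact (div_le_iff₀ (hW i)).1 (by linarith)

/-- The costs achievable by adding to the residual `r` a correction with at most `q` nonzero
entries; `dinc` is the infimum of this set for the residual `y - H x`. -/
def sparseCosts [Fintype ι] (W : ι → ℝ) (q : ℕ) (r : ι → ℝ) : Set ℝ :=
  {v | ∃ a : ι → ℝ, (support a).ncard ≤ q ∧ v = residualCost W Finset.univ (r + a)}

section Sparse

variable [Fintype ι] [DecidableEq ι]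

theorem residualCost_univ_add_neg_indicator (W : ι → ℝ) (I : Finset ι) (r : ι → ℝ) :
    residualCost W Finset.univ (r + -(I : Set ι).indicator r) = residualCost W Iᶜ r := by
  rw [residualCost, residualCost, ← Finset.sum_add_sum_compl I, Finset.sum_eq_zero, zero_add]
  · congr 1
    refine Finset.sum_congr rfl fun i hi => ?_
    simp [Finset.mem_compl.1 hi]
  · intro i hi
    simp [hi]

theorem residualCost_compl_le_univ_add (hW : ∀ i, 0 < W i) {I : Finset ι} {a : ι → ℝ}
    (ha : support a ⊆ I) (r : ι → ℝ) :
    residualCost W Iᶜ r ≤ residualCost W Finset.univ (r + a) := by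
  have hcongr : residualCost W Iᶜ r = residualCost W Iᶜ (r + a) :=
    residualCost_congr fun i hi => by
      simp [notMem_support.1 fun hia => Finset.mem_compl.1 hi (ha hia)]
  exact hcongr.trans_le (residualCost_mono hW (Finset.subset_univ _) _)

theorem residualCost_compl_mem_sparseCosts (W : ι → ℝ) {q : ℕ} {I : Finset ι} (hI : I.card ≤ q)
    (r : ι → ℝ) : residualCost W Iᶜ r ∈ sparseCosts W q r := by
  refine ⟨-(I : Set ι).indicator r, ?_, (residualCost_univ_add_neg_indicator W I r).symm⟩
  rw [support_neg]
  calc (support ((I : Set ι).indicator r)).ncard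
      ≤ (I : Set ι).ncard := ncard_le_ncard support_indicator_subset
    _ ≤ q := by rwa [ncard_coe_finset]

theorem exists_residualCost_compl_le_of_mem_sparseCosts (hW : ∀ i, 0 < W i) {q : ℕ} {r : ι → ℝ}
    {v : ℝ} (hv : v ∈ sparseCosts W q r) :
    ∃ I : Finset ι, I.card ≤ q ∧ residualCost W Iᶜ r ≤ v := by
  obtain ⟨a, ha, rfl⟩ := hv
  refine ⟨(toFinite (support a)).toFinset, ?_, residualCost_compl_le_univ_add hW (by simp) r⟩
  rwa [← ncard_eq_toFinset_card]

theorem exists_isLeast_sparseCosts (hW : ∀ i, 0 < W i) (q : ℕ) (r : ι → ℝ) :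
    ∃ I : Finset ι, I.card ≤ q ∧ IsLeast (sparseCosts W q r) (residualCost W Iᶜ r) := by
  obtain ⟨I, hI, hmin⟩ := (toFinite {I : Finset ι | I.card ≤ q}).exists_minimalFor
    (fun I => residualCost W Iᶜ r) _ ⟨∅, by simp⟩
  refine ⟨I, hI, residualCost_compl_mem_sparseCosts W hI r, fun v hv => ?_⟩
  obtain ⟨J, hJ, hJv⟩ := exists_residualCost_compl_le_of_mem_sparseCosts hW hv
  exact (le_total _ _).elim id (hmin hJ) |>.trans hJv

theorem sInf_sparseCosts_le_iff (hW : ∀ i, 0 < W i) {q : ℕ} {r : ι → ℝ} {φ : ℝ} :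
    sInf (sparseCosts W q r) ≤ φ ↔ ∃ I : Finset ι, I.card ≤ q ∧ residualCost W Iᶜ r ≤ φ := by
  obtain ⟨I, hI, hleast⟩ := exists_isLeast_sparseCosts hW q r
  rw [hleast.csInf_eq]
  exact ⟨fun h => ⟨I, hI, h⟩, fun ⟨J, hJ, h⟩ =>
    (hleast.2 (residualCost_compl_mem_sparseCosts W hJ r)).trans h⟩

end Sparse

theorem isCompact_setOf_residualCost_univ_le [Fintype ι] (hW : ∀ i, 0 < W i) (φ : ℝ) :
    IsCompact {r : ι → ℝ | residualCost W Finset.univ r ≤ φ} := by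
  have hclosed : IsClosed {r : ι → ℝ | residualCost W Finset.univ r ≤ φ} :=
    isClosed_le (by unfold residualCost; fun_prop) continuous_const
  have hsub : {r : ι → ℝ | residualCost W Finset.univ r ≤ φ} ⊆
      Icc (fun i => -√(2 * φ * W i)) (fun i => √(2 * φ * W i)) := fun r hr =>
    have habs i := abs_le.1 (Real.abs_le_sqrt (sq_le_of_residualCost_le hW hr (Finset.mem_univ i)))
    ⟨fun i => (habs i).1, fun i => (habs i).2⟩
  exact isCompact_Icc.of_isClosed_subset hclosed hsub

theorem isCompact_setOf_residualCost_sub_le {E : Type*} [AddCommGroup E] [Module ℝ E]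
    [TopologicalSpace E] [IsTopologicalAddGroup E] [ContinuousSMul ℝ E] [T2Space E]
    [FiniteDimensional ℝ E] (hW : ∀ i, 0 < W i) {S : Finset ι} {L : E →ₗ[ℝ] ι → ℝ}
    (hL : ∀ x, (∀ i ∈ S, L x i = 0) → x = 0) (y : ι → ℝ) (φ : ℝ) :
    IsCompact {x | residualCost W S (y - L x) ≤ φ} := by
  let LS : E →ₗ[ℝ] S → ℝ := LinearMap.funLeft ℝ ℝ (Subtype.val : S → ι) ∘ₗ L
  have hker : LinearMap.ker LS = ⊥ :=
    LinearMap.ker_eq_bot'.2 fun x hx => hL x fun i hi => congrFun hx ⟨i, hi⟩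
  have hemb : IsClosedEmbedding fun x => (fun i : S => y i) - LS x :=
    (Homeomorph.subLeft _).isClosedEmbedding.comp (LinearMap.isClosedEmbedding_of_injective hker)
  simp only [residualCost_eq_univ_subtype S]
  exact hemb.isCompact_preimage (isCompact_setOf_residualCost_univ_le (fun i : S => hW i) φ)

end ResidualCost

section Observability

variable {ι κ R : Type*} [Fintype κ] [NonUnitalNonAssocSemiring R] {H : Matrix ι κ R} {s t : ℕ}

/-- `H` is `s`-observable: no nonzero state is hidden by an attack on at most `s` measurements.
For a real matrix this says that deleting at most `s` rows leaves full column rank. -/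
def SparselyObservable (s : ℕ) (H : Matrix ι κ R) : Prop :=
  ∀ v : κ → R, (support (H.mulVec v)).encard ≤ s → v = 0

theorem SparselyObservable.anti (hH : SparselyObservable t H) (hst : s ≤ t) :
    SparselyObservable s H :=
  fun v hv => hH v (hv.trans (Nat.cast_le.2 hst))

theorem SparselyObservable.eq_zero_of_forall_notMem (hH : SparselyObservable s H) {I : Finset ι}
    (hI : I.card ≤ s) {v : κ → R} (hv : ∀ i ∉ I, H.mulVec v i = 0) : v = 0 := by
  have hsupp : support (H.mulVec v) ⊆ I := support_subset_iff'.2 hv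
  refine hH v ((encard_le_encard hsupp).trans ?_)
  rw [encard_coe_eq_coe_finsetCard]
  exact Nat.cast_le.2 hI

theorem mulVec_injective_of_rank_eq_card {K : Type*} [Field K] {A : Matrix ι κ K}
    (hA : A.rank = Fintype.card κ) : Injective A.mulVec := by
  rw [Matrix.mulVec_injective_iff, linearIndependent_iff_card_eq_finrank_span, ← hA,
    Matrix.rank_eq_finrank_span_cols, Set.finrank]

end Observability

section Inconsistency

variable {m n q : ℕ} {H : Matrix (Fin m) (Fin n) ℝ}

theorem TwoQObservable.sparselyObservable (hH : TwoQObservable m n q H) :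
    SparselyObservable (2 * q) H := by
  intro v hv
  have hcard : m - 2 * q ≤ (Finset.univ.filter fun i => H.mulVec v i = 0).card := by
    have hsplit := Finset.card_filter_add_card_filter_not (s := Finset.univ)
      fun i => H.mulVec v i = 0
    have hsupp : support (H.mulVec v) = Finset.univ.filter fun i => ¬H.mulVec v i = 0 := by
      ext i
      simp
    rw [hsupp, encard_coe_eq_coe_finsetCard, Nat.cast_le] at hv
    rw [Finset.card_univ, Fintype.card_fin] at hsplit
    omega
  obtain ⟨J, hJ, hJcard⟩ := Finset.exists_subset_card_eq hcard
  have hinj := mulVec_injective_of_rank_eq_card ((hH.2 J hJcard).trans (Fintype.card_fin n).symm)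
  refine hinj (funext fun i => ?_)
  rw [Matrix.mulVec_zero]
  exact (Finset.mem_filter.1 (hJ i.2)).2

variable {W : Fin m → ℝ}

theorem dinc_le_iff (hW : ∀ i, 0 < W i) {x : EuclideanSpace ℝ (Fin n)} {y : Fin m → ℝ} {φ : ℝ} :
    dinc m n q H W x y ≤ φ ↔
      ∃ I : Finset (Fin m), I.card ≤ q ∧ residualCost W Iᶜ (y - H.mulVec x) ≤ φ :=
  sInf_sparseCosts_le_iff hW

theorem isCompact_setOf_dinc_le (hW : ∀ i, 0 < W i) (hH : SparselyObservable q H)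
    (y : Fin m → ℝ) (φ : ℝ) : IsCompact {x | dinc m n q H W x y ≤ φ} := by
  let L : EuclideanSpace ℝ (Fin n) →ₗ[ℝ] Fin m → ℝ :=
    H.mulVecLin ∘ₗ (WithLp.linearEquiv 2 ℝ (Fin n → ℝ)).toLinearMap
  have hunion : {x | dinc m n q H W x y ≤ φ} =
      ⋃ I ∈ {I : Finset (Fin m) | I.card ≤ q}, {x | residualCost W Iᶜ (y - L x) ≤ φ} := by
    ext x
    simp [dinc_le_iff hW, L]
  rw [hunion]
  refine (toFinite _).isCompact_biUnion fun I hI =>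
    isCompact_setOf_residualCost_sub_le hW (fun x hx => ?_) y φ
  exact (WithLp.ofLp_eq_zero 2).1
    (hH.eq_zero_of_forall_notMem hI fun i hi => hx i (Finset.mem_compl.2 hi))

end Inconsistency

theorem stmt_4_general (m n q : ℕ) (H : Matrix (Fin m) (Fin n) ℝ) (W : Fin m → ℝ)
    (hW : ∀ i, 0 < W i) (hobs : SparselyObservable q H) (y : Fin m → ℝ) :
    Monotone (fun φ : ℝ => rad n (sublevel m n q H W y φ)) ∧
    ∀ φ₀ : ℝ, ContinuousWithinAt (fun φ : ℝ => rad n (sublevel m n q H W y φ))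
      (Set.Ici φ₀) φ₀ :=
  have hcompact := isCompact_setOf_dinc_le hW hobs y
  ⟨monotone_chebyshevRadius_le fun φ => (hcompact φ).isBounded,
    continuousWithinAt_chebyshevRadius_le hcompact⟩

/-- under `2q`-observability, `φ ↦ rad(X(y,φ))` is monotone
nondecreasing and right-continuous at every point. -/
theorem stmt_4 (m n q : ℕ) (hm : 1 ≤ m) (hn : 1 ≤ n) (hq : q ≤ m)
    (H : Matrix (Fin m) (Fin n) ℝ) (W : Fin m → ℝ) (hW : ∀ i, 0 < W i)
    (hobs : TwoQObservable m n q H) (y : Fin m → ℝ) :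
    Monotone (fun φ : ℝ => rad n (sublevel m n q H W y φ)) ∧
    ∀ φ₀ : ℝ, ContinuousWithinAt (fun φ : ℝ => rad n (sublevel m n q H W y φ))
      (Set.Ici φ₀) φ₀ := by
  exact stmt_4_general m n q H W hW (hobs.sparselyObservable.anti (by omega)) y
end

section
/- Suppose 2q ≤ m and H is NOT 2q-observable, i.e., there exists an index set I ⊆ {1,…,m} with |I| = m − 2q and a nonzero vector v ∈ ℝ^n with H_I v = 0. Then for every δ > 0 there exist y* ∈ ℝ^m and x₁, x₂ ∈ ℝ^n such that d_{x₁}(y*) = 0, d_{x₂}(y*) = 0, and ‖x₁ − x₂‖₂ > δ. -/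
/-!
Two states explain the same measurement `y` with zero inconsistency as soon as `y` lies within
Hamming distance `q` of both of their exact outputs. Outputs at Hamming distance at most `2q` always
have such a midpoint: let `y` follow one output on half of the coordinates where they differ, and
the other output elsewhere. A kernel vector of `m - 2q` rows has output supported on the remaining
`2q` rows, and so do all its multiples; hence an arbitrarily large multiple of it shares a
measurement with the state `0`.
-/

open Finset Matrix

section Hamming

variable {ι : Type*} [Fintype ι]

theorem ncard_support_eq_hammingNorm {M : Type*} [Zero M] [DecidableEq M] (a : ι → M) :
    (Function.support a).ncard = hammingNorm a := by
  rw [hammingNorm, ← Set.ncard_coe_finset, coe_filter_univ]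
  rfl

theorem hammingNorm_le_card_compl [DecidableEq ι] {β : ι → Type*} [∀ i, Zero (β i)]
    [∀ i, DecidableEq (β i)] {u : ∀ i, β i} {I : Finset ι} (hu : ∀ i ∈ I, u i = 0) :
    hammingNorm u ≤ #Iᶜ := by
  refine card_le_card fun i hi ↦ mem_compl.2 fun hiI ↦ ?_
  exact (mem_filter_univ i).1 hi (hu i hiI)

theorem exists_hammingDist_le_of_hammingDist_le_add {β : ι → Type*} [∀ i, DecidableEq (β i)]
    {u w : ∀ i, β i} {p q : ℕ} (huw : hammingDist u w ≤ p + q) :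
    ∃ y, hammingDist u y ≤ p ∧ hammingDist w y ≤ q := by
  classical
  let D : Finset ι := {i | u i ≠ w i}
  obtain ⟨J, hJD, hJ⟩ := exists_subset_card_eq (min_le_right p #D)
  refine ⟨J.piecewise w u, ?_, ?_⟩
  · have diff_subset : ({i | u i ≠ J.piecewise w u i} : Finset ι) ⊆ J := by
      intro i hi
      by_contra hiJ
      simp [hiJ] at hi
    exact (card_le_card diff_subset).trans (hJ.trans_le (min_le_left _ _))
  · have diff_subset : ({i | w i ≠ J.piecewise w u i} : Finset ι) ⊆ D \ J := by
      intro i hi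
      by_cases hiJ : i ∈ J
      · simp [hiJ] at hi
      · simpa [D, hiJ, ne_comm] using hi
    have card_diff : #(D \ J) ≤ q := by
      have : #D ≤ p + q := huw
      rw [card_sdiff_of_subset hJD]
      omega
    exact (card_le_card diff_subset).trans card_diff

end Hamming

section Inconsistency

theorem half_sum_sq_div_nonneg {ι : Type*} [Fintype ι] {W : ι → ℝ} (hW : ∀ i, 0 ≤ W i)
    (r : ι → ℝ) : 0 ≤ (1 / 2 : ℝ) * ∑ i, r i ^ 2 / W i :=
  mul_nonneg (by norm_num) (sum_nonneg fun i _ ↦ div_nonneg (sq_nonneg _) (hW i))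

variable {m n q : ℕ} {H : Matrix (Fin m) (Fin n) ℝ} {W : Fin m → ℝ}

theorem dinc_nonneg (hW : ∀ i, 0 ≤ W i) (x : EuclideanSpace ℝ (Fin n)) (y : Fin m → ℝ) :
    0 ≤ dinc m n q H W x y := by
  refine Real.sInf_nonneg ?_
  rintro _ ⟨a, -, rfl⟩
  exact half_sum_sq_div_nonneg hW _

theorem dinc_le (hW : ∀ i, 0 ≤ W i) (x : EuclideanSpace ℝ (Fin n)) (y : Fin m → ℝ)
    {a : Fin m → ℝ} (ha : hammingNorm a ≤ q) :
    dinc m n q H W x y ≤ (1 / 2 : ℝ) * ∑ i, (y i - (H *ᵥ x) i + a i) ^ 2 / W i := by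
  refine csInf_le ⟨0, ?_⟩ ⟨a, (ncard_support_eq_hammingNorm a).trans_le ha, rfl⟩
  rintro _ ⟨b, -, rfl⟩
  exact half_sum_sq_div_nonneg hW _

theorem dinc_eq_zero_of_hammingDist_le (hW : ∀ i, 0 ≤ W i) {x : EuclideanSpace ℝ (Fin n)}
    {y : Fin m → ℝ} (hxy : hammingDist (H *ᵥ x) y ≤ q) : dinc m n q H W x y = 0 := by
  have hattack : hammingNorm (-y + H *ᵥ x) ≤ q := by
    rwa [← hammingDist_eq_hammingNorm, hammingDist_comm]
  refine le_antisymm ((dinc_le hW x y hattack).trans_eq ?_) (dinc_nonneg hW x y)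
  simp

theorem exists_dinc_eq_zero_of_hammingDist_le (hW : ∀ i, 0 ≤ W i)
    {x₁ x₂ : EuclideanSpace ℝ (Fin n)} (hx : hammingDist (H *ᵥ x₁) (H *ᵥ x₂) ≤ 2 * q) :
    ∃ y, dinc m n q H W x₁ y = 0 ∧ dinc m n q H W x₂ y = 0 := by
  obtain ⟨y, hy₁, hy₂⟩ := exists_hammingDist_le_of_hammingDist_le_add (hx.trans_eq (two_mul q))
  exact ⟨y, dinc_eq_zero_of_hammingDist_le hW hy₁, dinc_eq_zero_of_hammingDist_le hW hy₂⟩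

end Inconsistency

theorem exists_lt_norm_smul (𝕜 : Type*) {E : Type*} [NontriviallyNormedField 𝕜]
    [NormedAddCommGroup E] [NormedSpace 𝕜 E] {v : E} (hv : v ≠ 0) (r : ℝ) :
    ∃ c : 𝕜, r < ‖c • v‖ := by
  obtain ⟨c, hc⟩ := NormedField.exists_lt_norm 𝕜 (r / ‖v‖)
  exact ⟨c, by rwa [norm_smul, ← div_lt_iff₀ (norm_pos_iff.2 hv)]⟩

/-- if `2q ≤ m` and `H` is NOT `2q`-observable (some `(m−2q)`-row
submatrix has a nonzero kernel vector), then for every `δ > 0` there exist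
`y*` and states `x₁, x₂` with zero inconsistency and `‖x₁ − x₂‖₂ > δ`. -/
theorem stmt_7 (m n q : ℕ) (hm : 1 ≤ m) (hn : 1 ≤ n) (hq : q ≤ m)
    (H : Matrix (Fin m) (Fin n) ℝ) (W : Fin m → ℝ) (hW : ∀ i, 0 < W i)
    (hqm : 2 * q ≤ m)
    (hnotobs : ∃ I : Finset (Fin m), I.card = m - 2 * q ∧
      ∃ v : EuclideanSpace ℝ (Fin n), v ≠ 0 ∧ ∀ i ∈ I, ∑ j, H i j * v j = 0) :
    ∀ δ : ℝ, 0 < δ →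
      ∃ (ystar : Fin m → ℝ) (x₁ x₂ : EuclideanSpace ℝ (Fin n)),
        dinc m n q H W x₁ ystar = 0 ∧ dinc m n q H W x₂ ystar = 0 ∧
        δ < ‖x₁ - x₂‖ := by
  intro δ _
  obtain ⟨I, hI, v, hv, hIv⟩ := hnotobs
  obtain ⟨c, hc⟩ := exists_lt_norm_smul ℝ hv δ
  have hHv : hammingNorm (H *ᵥ v) ≤ 2 * q :=
    calc hammingNorm (H *ᵥ v) ≤ #Iᶜ := hammingNorm_le_card_compl hIv
      _ = 2 * q := by rw [card_compl, hI, Fintype.card_fin, Nat.sub_sub_self hqm]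
  have hdist : hammingDist (H *ᵥ (c • v)) (H *ᵥ (0 : EuclideanSpace ℝ (Fin n))) ≤ 2 * q := by
    simpa [mulVec_smul] using hammingNorm_smul_le_hammingNorm.trans hHv
  obtain ⟨y, hy₁, hy₂⟩ := exists_dinc_eq_zero_of_hammingDist_le (fun i ↦ (hW i).le) hdist
  exact ⟨y, c • v, 0, hy₁, hy₂, by rwa [sub_zero]⟩
end

section
/- Let x ∈ ℝ^n, δ > 0, let x* ∈ ℝ^n satisfy ‖x*‖₂ = 1, and let s* ∈ ℝ^m have at most 2q nonzero entries. Let I₀, I₁ ⊆ {1,…,m} be disjoint sets with I₀ ∪ I₁ = supp(s*), |I₀| ≤ q and |I₁| ≤ q, and set v := (1/2)·Σ_{i=1}^m (H_i x* + s*_i)²/W_i. Define y* ∈ ℝ^m by y*_i = H_i x for i ∉ supp(s*), y*_i = H_i (x − δ·x*) for i ∈ I₀, and y*_i = H_i (x + δ·x*) for i ∈ I₁. Then d_{x − δ·x*}(y*) ≤ δ²·v, d_{x + δ·x*}(y*) ≤ δ²·v, and ‖(x + δ·x*) − (x − δ·x*)‖₂ = 2δ. -/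
/-!
Put the corrections in `I₁` when testing `x - δ • x*`, and in `I₀` when testing `x + δ • x*`. For
`x + δ • x*` the remaining residual vanishes on `I₁`, and off `supp s*` it is
`-δ * H_i x* = -δ * (H_i x* + s*_i)`, so each term is at most the corresponding term of `δ² * v`.
The other sign is the same argument with `-δ` in place of `δ`.
-/

open Matrix

section Inconsistency

variable {m n q : ℕ} {H : Matrix (Fin m) (Fin n) ℝ} {W : Fin m → ℝ}
  {x z : EuclideanSpace ℝ (Fin n)} {y s : Fin m → ℝ}

lemma dinc_le_of_ncard_support_le (hW : ∀ i, 0 ≤ W i) {a : Fin m → ℝ}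
    (ha : (Function.support a).ncard ≤ q) :
    dinc m n q H W x y ≤ 1 / 2 * ∑ i, (y i - (H *ᵥ x) i + a i) ^ 2 / W i := by
  refine csInf_le ⟨0, ?_⟩ ⟨a, ha, rfl⟩
  rintro _ ⟨b, -, rfl⟩
  exact mul_nonneg one_half_pos.le
    (Finset.sum_nonneg fun i _ => div_nonneg (sq_nonneg _) (hW i))

lemma dinc_le_sum_compl (hW : ∀ i, 0 ≤ W i) {I : Finset (Fin m)} (hI : I.card ≤ q) :
    dinc m n q H W x y ≤ 1 / 2 * ∑ i ∈ Iᶜ, (y i - (H *ᵥ x) i) ^ 2 / W i := by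
  let a : Fin m → ℝ := (I : Set (Fin m)).indicator fun i => (H *ᵥ x) i - y i
  have ha : (Function.support a).ncard ≤ q :=
    calc (Function.support a).ncard ≤ (I : Set (Fin m)).ncard :=
          Set.ncard_le_ncard Set.support_indicator_subset I.finite_toSet
      _ = I.card := Set.ncard_coe_finset I
      _ ≤ q := hI
  have hsum : ∑ i, (y i - (H *ᵥ x) i + a i) ^ 2 / W i =
      ∑ i ∈ Iᶜ, (y i - (H *ᵥ x) i) ^ 2 / W i := by
    rw [← Finset.sum_add_sum_compl I, Finset.sum_eq_zero, zero_add]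
    · refine Finset.sum_congr rfl fun i hi => ?_
      simp [a, Finset.mem_compl.mp hi]
    · intro i hi
      simp [a, hi]
  exact hsum ▸ dinc_le_of_ncard_support_le hW ha

lemma dinc_add_smul_le (hW : ∀ i, 0 ≤ W i) (t : ℝ) {I J : Finset (Fin m)} (hI : I.card ≤ q)
    (hs : ∀ i ∉ I, i ∉ J → s i = 0) (hy : ∀ i ∉ I, i ∉ J → y i = (H *ᵥ x) i)
    (hyJ : ∀ i ∈ J, y i = (H *ᵥ (x + t • z)) i) :
    dinc m n q H W (x + t • z) y ≤ t ^ 2 * (1 / 2 * ∑ i, ((H *ᵥ z) i + s i) ^ 2 / W i) := by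
  have hresidual : ∀ i ∉ I, (y i - (H *ᵥ (x + t • z)) i) ^ 2 ≤ t ^ 2 * ((H *ᵥ z) i + s i) ^ 2 := by
    intro i hiI
    by_cases hiJ : i ∈ J
    · rw [hyJ i hiJ, sub_self, zero_pow two_ne_zero]
      positivity
    · rw [hy i hiI hiJ, hs i hiI hiJ, mulVec_add, mulVec_smul, Pi.add_apply, Pi.smul_apply,
        smul_eq_mul]
      exact le_of_eq (by ring)
  calc dinc m n q H W (x + t • z) y
      ≤ 1 / 2 * ∑ i ∈ Iᶜ, (y i - (H *ᵥ (x + t • z)) i) ^ 2 / W i := dinc_le_sum_compl hW hI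
    _ ≤ 1 / 2 * ∑ i ∈ Iᶜ, t ^ 2 * ((H *ᵥ z) i + s i) ^ 2 / W i := by
      gcongr with i hi
      · exact hW i
      · exact hresidual i (Finset.mem_compl.mp hi)
    _ ≤ 1 / 2 * ∑ i, t ^ 2 * ((H *ᵥ z) i + s i) ^ 2 / W i := by
      gcongr
      · exact fun i _ _ => div_nonneg (by positivity) (hW i)
      · exact Finset.subset_univ _
    _ = t ^ 2 * (1 / 2 * ∑ i, ((H *ᵥ z) i + s i) ^ 2 / W i) := by
      simp only [mul_div_assoc, ← Finset.mul_sum, mul_left_comm]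

end Inconsistency

lemma norm_add_smul_sub_sub_smul {E : Type*} [SeminormedAddCommGroup E] [NormedSpace ℝ E]
    (x z : E) (t : ℝ) : ‖(x + t • z) - (x - t • z)‖ = 2 * |t| * ‖z‖ := by
  rw [add_sub_sub_cancel, ← two_smul ℝ, norm_smul, norm_smul, Real.norm_two, Real.norm_eq_abs,
    mul_assoc]

/-- the construction used in the proof of the upper bound:
with `y*` agreeing with `Hx` off `supp(s*)`, with `H(x − δx*)` on `I₀`, and
with `H(x + δx*)` on `I₁`, both `x ± δx*` have inconsistency at most `δ²·v`,
and they are `2δ` apart. -/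
theorem stmt_10 (m n q : ℕ) (hm : 1 ≤ m) (hn : 1 ≤ n) (hq : q ≤ m)
    (H : Matrix (Fin m) (Fin n) ℝ) (W : Fin m → ℝ) (hW : ∀ i, 0 < W i)
    (x xstar : EuclideanSpace ℝ (Fin n)) (δ : ℝ) (hδ : 0 < δ)
    (hxstar : ‖xstar‖ = 1)
    (sstar : Fin m → ℝ) (hs : (Function.support sstar).ncard ≤ 2 * q)
    (I₀ I₁ : Finset (Fin m)) (hdisj : Disjoint I₀ I₁)
    (hcover : (↑I₀ ∪ ↑I₁ : Set (Fin m)) = Function.support sstar)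
    (hI₀ : I₀.card ≤ q) (hI₁ : I₁.card ≤ q)
    (v : ℝ) (hv : v = (1 / 2 : ℝ) * ∑ i, ((∑ j, H i j * xstar j) + sstar i) ^ 2 / W i)
    (ystar : Fin m → ℝ)
    (hy0 : ∀ i, i ∉ Function.support sstar → ystar i = ∑ j, H i j * x j)
    (hy1 : ∀ i ∈ I₀, ystar i = ∑ j, H i j * (x j - δ * xstar j))
    (hy2 : ∀ i ∈ I₁, ystar i = ∑ j, H i j * (x j + δ * xstar j)) :
    dinc m n q H W (x - δ • xstar) ystar ≤ δ ^ 2 * v ∧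
    dinc m n q H W (x + δ • xstar) ystar ≤ δ ^ 2 * v ∧
    ‖(x + δ • xstar) - (x - δ • xstar)‖ = 2 * δ := by
  have hoff (i : Fin m) (hi₀ : i ∉ I₀) (hi₁ : i ∉ I₁) : i ∉ Function.support sstar := by
    simp [← hcover, hi₀, hi₁]
  have hs_off (i : Fin m) (hi₀ : i ∉ I₀) (hi₁ : i ∉ I₁) : sstar i = 0 :=
    Function.notMem_support.mp (hoff i hi₀ hi₁)
  have hy_off (i : Fin m) (hi₀ : i ∉ I₀) (hi₁ : i ∉ I₁) : ystar i = (H *ᵥ x) i :=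
    hy0 i (hoff i hi₀ hi₁)
  have hW_nonneg (i : Fin m) : 0 ≤ W i := (hW i).le
  subst hv
  refine ⟨?_, dinc_add_smul_le hW_nonneg δ hI₀ hs_off hy_off hy2, ?_⟩
  · rw [sub_eq_add_neg, ← neg_smul, ← neg_sq δ]
    refine dinc_add_smul_le hW_nonneg (-δ) hI₁ (fun i hi₁ hi₀ => hs_off i hi₀ hi₁)
      (fun i hi₁ hi₀ => hy_off i hi₀ hi₁) fun i hi => ?_
    rw [neg_smul, ← sub_eq_add_neg]
    exact hy1 i hi
  · rw [norm_add_smul_sub_sub_smul, abs_of_pos hδ, hxstar, mul_one]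
end
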